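/- Let f : [ω₂]² → [ω₂]^{≤ω} satisfy f{α,β} ⊆ α ∩ β for all pairs. If p ∈ P_f, β ∈ a^p, b ⊆ a^p ∩ β, and α ∈ β \ a^p, then there is a condition q ∈ P_f with q ≤ p such that α ∈ h^q(β) \ ⋃{h^q(ν) : ν ∈ b}. -/

import Mathlib

attribute [local instance] Classical.propDecidable

noncomputable section

/-- The second uncountable cardinal ω₂, as an ordinal. -/
def omega2 : Ordinal := (Cardinal.aleph 2).ord

/-- The operation `x * y` on nonempty finite sets of ordinals with `max x ≠ max y`:
`x \ y` if `max x ∈ y`, `y \ x` if `max y ∈ x`, and `x ∩ y` otherwise. -/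
def ostar (x y : Finset Ordinal) : Finset Ordinal :=
  if ∃ m ∈ y, x.max = (m : WithBot Ordinal) then x \ y
  else if ∃ m ∈ x, y.max = (m : WithBot Ordinal) then y \ x
  else x ∩ y

/-- The conditions of the poset `P_f`: triples `(a, h, i)` where `a` is a finite
subset of ω₂, `h : a → 𝒫(a)` with `max (h ξ) = ξ`, `i : [a]² → 𝒫(a)` with
`i {ξ,η} ⊆ f {ξ,η}`, and `h ξ * h η ⊆ ⋃ {h ν : ν ∈ i {ξ,η}}`. -/
structure PfCond (f : Ordinal → Ordinal → Set Ordinal) where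
  a : Finset Ordinal
  h : Ordinal → Finset Ordinal
  i : Ordinal → Ordinal → Finset Ordinal
  a_lt : ∀ ξ ∈ a, ξ < omega2
  h_sub : ∀ ξ ∈ a, h ξ ⊆ a
  h_mem : ∀ ξ ∈ a, ξ ∈ h ξ
  h_le : ∀ ξ ∈ a, ∀ η ∈ h ξ, η ≤ ξ
  i_symm : ∀ ξ η, i ξ η = i η ξ
  i_sub_f : ∀ ξ ∈ a, ∀ η ∈ a, ξ ≠ η → ∀ ν ∈ i ξ η, ν ∈ f ξ η
  i_sub_a : ∀ ξ ∈ a, ∀ η ∈ a, ξ ≠ η → i ξ η ⊆ a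
  star_cond : ∀ ξ ∈ a, ∀ η ∈ a, ξ ≠ η → ostar (h ξ) (h η) ⊆ (i ξ η).biUnion h

/-- The order on `P_f`: `p ≤ q` iff `a^p ⊇ a^q`, `h^p(ξ) ∩ a^q = h^q(ξ)` for
`ξ ∈ a^q`, and `i^p` extends `i^q`. -/
def PfLe {f : Ordinal → Ordinal → Set Ordinal} (p q : PfCond f) : Prop :=
  q.a ⊆ p.a ∧ (∀ ξ ∈ q.a, p.h ξ ∩ q.a = q.h ξ) ∧
    ∀ ξ ∈ q.a, ∀ η ∈ q.a, ξ ≠ η → p.i ξ η = q.i ξ η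

/-!
Add `α` to `p` as a twin of `β`: let `r` send `α` to `β` and fix every other point, replace each
`h ξ` by its preimage under `r`, and put `h α = {α}`. Preimages under `r` commute with the Boolean
operations, and, as `α < β`, preserve the maximum of any set whose maximum is not `α`; so they
commute with `*`, and the covering condition for `h ξ * h η` is inherited from `p`. The pairs that
contain `α` satisfy it because `{α} * y` is empty. The new point lies in exactly those `h ξ` that
contain `β`; none of them has `ξ < β`.
-/

section Duplicate

variable {ι : Type*} [DecidableEq ι] {α β γ : ι} {x y : Finset ι}

/-- The set `x` with `α` made a twin of `β`: the preimage of `x` under the map sending `α` to `β`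
and fixing all other points. It is encoded as a filter because `Finset.preimage` asks for
injectivity. -/
def duplicate (α β : ι) (x : Finset ι) : Finset ι :=
  {γ ∈ insert α x | Function.update id α β γ ∈ x}

theorem duplicate_subset_insert : duplicate α β x ⊆ insert α x :=
  Finset.filter_subset _ _

theorem mem_duplicate : γ ∈ duplicate α β x ↔ Function.update id α β γ ∈ x := by
  by_cases hγ : γ = α <;> simp [duplicate, hγ]

theorem self_mem_duplicate : α ∈ duplicate α β x ↔ β ∈ x := by
  rw [mem_duplicate, Function.update_self]

theorem mem_duplicate_of_ne (hγ : γ ≠ α) : γ ∈ duplicate α β x ↔ γ ∈ x := by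
  rw [mem_duplicate, Function.update_of_ne hγ, id]

theorem duplicate_sdiff : duplicate α β (x \ y) = duplicate α β x \ duplicate α β y := by
  ext γ
  simp only [Finset.mem_sdiff, mem_duplicate]

theorem duplicate_inter : duplicate α β (x ∩ y) = duplicate α β x ∩ duplicate α β y := by
  ext γ
  simp only [Finset.mem_inter, mem_duplicate]

theorem duplicate_mono (hxy : x ⊆ y) : duplicate α β x ⊆ duplicate α β y :=
  fun _ hγ => mem_duplicate.2 (hxy (mem_duplicate.1 hγ))

theorem duplicate_biUnion {κ : Type*} {s : Finset κ} {h : κ → Finset ι} :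
    duplicate α β (s.biUnion h) = s.biUnion fun ν => duplicate α β (h ν) := by
  ext γ
  simp only [Finset.mem_biUnion, mem_duplicate]

theorem duplicate_inter_eq_self (hxy : x ⊆ y) (hα : α ∉ y) : duplicate α β x ∩ y = x := by
  ext γ
  rw [Finset.mem_inter]
  constructor
  · rintro ⟨hγ, hγy⟩
    exact (mem_duplicate_of_ne (ne_of_mem_of_not_mem hγy hα)).1 hγ
  · intro hγ
    exact ⟨(mem_duplicate_of_ne (ne_of_mem_of_not_mem (hxy hγ) hα)).2 hγ, hxy hγ⟩

theorem isGreatest_duplicate [Preorder ι] {ξ : ι} (hx : IsGreatest (x : Set ι) ξ) (hαβ : α ≤ β)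
    (hξ : ξ ≠ α) : IsGreatest (duplicate α β x : Set ι) ξ := by
  refine ⟨(mem_duplicate_of_ne hξ).2 hx.1, fun γ hγ => ?_⟩
  obtain rfl | hγα := eq_or_ne γ α
  · exact hαβ.trans (hx.2 (self_mem_duplicate.1 hγ))
  · exact hx.2 ((mem_duplicate_of_ne hγα).1 hγ)

end Duplicate

theorem finset_max_eq_of_isGreatest {ι : Type*} [LinearOrder ι] {x : Finset ι} {ξ : ι}
    (hx : IsGreatest (x : Set ι) ξ) : x.max = (ξ : WithBot ι) :=
  le_antisymm (Finset.max_le fun _ hγ => WithBot.coe_le_coe.2 (hx.2 hγ)) (Finset.le_max hx.1)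

section Ostar

variable {x y : Finset Ordinal} {α β ξ η : Ordinal}

theorem ostar_eq_ite (hx : IsGreatest (x : Set Ordinal) ξ) (hy : IsGreatest (y : Set Ordinal) η) :
    ostar x y = if ξ ∈ y then x \ y else if η ∈ x then y \ x else x ∩ y := by
  simp only [ostar, finset_max_eq_of_isGreatest hx, finset_max_eq_of_isGreatest hy,
    WithBot.coe_inj, exists_eq_right']

theorem ostar_comm (hx : IsGreatest (x : Set Ordinal) ξ) (hy : IsGreatest (y : Set Ordinal) η)
    (hne : ξ ≠ η) : ostar x y = ostar y x := by
  have not_both : ¬(ξ ∈ y ∧ η ∈ x) := fun ⟨hξ, hη⟩ => hne (le_antisymm (hy.2 hξ) (hx.2 hη))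
  rw [ostar_eq_ite hx hy, ostar_eq_ite hy hx, Finset.inter_comm]
  split_ifs <;> tauto

theorem ostar_singleton_left (hy : IsGreatest (y : Set Ordinal) η) (hne : α ≠ η) :
    ostar {α} y = ∅ := by
  have hα : IsGreatest (({α} : Finset Ordinal) : Set Ordinal) α := by
    simpa only [Finset.coe_singleton] using isGreatest_singleton
  rw [ostar_eq_ite hα hy, if_neg (Finset.mem_singleton.not.2 hne.symm)]
  split_ifs with hαy
  · exact Finset.sdiff_eq_empty_iff_subset.2 (Finset.singleton_subset_iff.2 hαy)
  · exact Finset.singleton_inter_of_notMem hαy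

theorem ostar_duplicate (hx : IsGreatest (x : Set Ordinal) ξ) (hy : IsGreatest (y : Set Ordinal) η)
    (hαβ : α ≤ β) (hξ : ξ ≠ α) (hη : η ≠ α) :
    ostar (duplicate α β x) (duplicate α β y) = duplicate α β (ostar x y) := by
  rw [ostar_eq_ite (isGreatest_duplicate hx hαβ hξ) (isGreatest_duplicate hy hαβ hη),
    ostar_eq_ite hx hy]
  simp only [mem_duplicate_of_ne hξ, mem_duplicate_of_ne hη, ← duplicate_sdiff, ← duplicate_inter,
    apply_ite (duplicate α β)]

end Ostar

namespace PfCond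

variable {f : Ordinal → Ordinal → Set Ordinal} (p : PfCond f) {α β ξ η : Ordinal}

theorem isGreatest_h (hξ : ξ ∈ p.a) : IsGreatest (p.h ξ : Set Ordinal) ξ :=
  ⟨p.h_mem ξ hξ, p.h_le ξ hξ⟩

/-- The function `h` of the extension of `p` by a twin `α` of `β`. -/
def twinH (α β : Ordinal) : Ordinal → Finset Ordinal :=
  Function.update (fun ξ => duplicate α β (p.h ξ)) α {α}

theorem twinH_self : p.twinH α β α = {α} :=
  Function.update_self ..

theorem twinH_of_ne (hξ : ξ ≠ α) : p.twinH α β ξ = duplicate α β (p.h ξ) :=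
  Function.update_of_ne hξ ..

theorem twinH_subset (hξ : ξ ∈ insert α p.a) : p.twinH α β ξ ⊆ insert α p.a := by
  obtain rfl | hξα := eq_or_ne ξ α
  · rw [twinH_self, Finset.singleton_subset_iff]
    exact hξ
  · rw [p.twinH_of_ne hξα]
    exact duplicate_subset_insert.trans
      (Finset.insert_subset_insert α (p.h_sub ξ (Finset.mem_of_mem_insert_of_ne hξ hξα)))

theorem isGreatest_twinH (hαβ : α ≤ β) (hξ : ξ ∈ insert α p.a) :
    IsGreatest (p.twinH α β ξ : Set Ordinal) ξ := by
  obtain rfl | hξα := eq_or_ne ξ α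
  · simpa only [twinH_self, Finset.coe_singleton] using isGreatest_singleton
  · rw [p.twinH_of_ne hξα]
    exact isGreatest_duplicate (p.isGreatest_h (Finset.mem_of_mem_insert_of_ne hξ hξα)) hαβ hξα

theorem ostar_twinH_self_left (hαβ : α ≤ β) (hη : η ∈ insert α p.a) (hne : α ≠ η) :
    ostar (p.twinH α β α) (p.twinH α β η) = ∅ := by
  rw [twinH_self]
  exact ostar_singleton_left (p.isGreatest_twinH hαβ hη) hne

theorem ostar_twinH_subset (hαβ : α ≤ β) (hαa : α ∉ p.a) (hξ : ξ ∈ p.a) (hη : η ∈ p.a)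
    (hne : ξ ≠ η) :
    ostar (p.twinH α β ξ) (p.twinH α β η) ⊆ (p.i ξ η).biUnion (p.twinH α β) := by
  have ne_α {ν : Ordinal} (hν : ν ∈ p.a) : ν ≠ α := ne_of_mem_of_not_mem hν hαa
  calc ostar (p.twinH α β ξ) (p.twinH α β η)
      = duplicate α β (ostar (p.h ξ) (p.h η)) := by
        rw [p.twinH_of_ne (ne_α hξ), p.twinH_of_ne (ne_α hη),
          ostar_duplicate (p.isGreatest_h hξ) (p.isGreatest_h hη) hαβ (ne_α hξ) (ne_α hη)]
    _ ⊆ duplicate α β ((p.i ξ η).biUnion p.h) := duplicate_mono (p.star_cond ξ hξ η hη hne)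
    _ = (p.i ξ η).biUnion fun ν => duplicate α β (p.h ν) := duplicate_biUnion
    _ = (p.i ξ η).biUnion (p.twinH α β) :=
        Finset.biUnion_congr rfl fun _ hν =>
          (p.twinH_of_ne (ne_α (p.i_sub_a ξ hξ η hη hne hν))).symm

/-- The function `i` of the extension of `p` by a new point `α`: empty on the pairs containing `α`,
and `p.i` on all others. -/
def twinI (α ξ η : Ordinal) : Finset Ordinal :=
  if ξ = α ∨ η = α then ∅ else p.i ξ η

theorem twinI_of_ne (hξ : ξ ≠ α) (hη : η ≠ α) : p.twinI α ξ η = p.i ξ η :=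
  if_neg (not_or.2 ⟨hξ, hη⟩)

theorem twinI_symm : p.twinI α ξ η = p.twinI α η ξ := by
  simp only [twinI, or_comm, p.i_symm ξ η]

theorem mem_of_mem_twinI {ν : Ordinal} (hξ : ξ ∈ insert α p.a) (hη : η ∈ insert α p.a)
    (hν : ν ∈ p.twinI α ξ η) : ξ ∈ p.a ∧ η ∈ p.a ∧ ν ∈ p.i ξ η := by
  unfold twinI at hν
  split_ifs at hν with h
  · exact absurd hν (Finset.notMem_empty ν)
  · obtain ⟨hξα, hηα⟩ := not_or.1 h
    exact ⟨Finset.mem_of_mem_insert_of_ne hξ hξα, Finset.mem_of_mem_insert_of_ne hη hηα, hν⟩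

/-- The extension of `p` by a new point `α < β` that is a twin of `β`: it belongs to exactly those
`h ξ` with `ξ ∈ p.a` which contain `β`. -/
def addTwin (hβ : β ∈ p.a) (hαβ : α < β) (hαa : α ∉ p.a) : PfCond f where
  a := insert α p.a
  h := p.twinH α β
  i := p.twinI α
  a_lt := (Finset.forall_mem_insert ..).2 ⟨hαβ.trans (p.a_lt β hβ), p.a_lt⟩
  h_sub _ hξ := p.twinH_subset hξ
  h_mem _ hξ := (p.isGreatest_twinH hαβ.le hξ).1
  h_le _ hξ _ hη := (p.isGreatest_twinH hαβ.le hξ).2 hη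
  i_symm _ _ := p.twinI_symm
  i_sub_f ξ hξ η hη hne ν hν := by
    obtain ⟨hξa, hηa, hνi⟩ := p.mem_of_mem_twinI hξ hη hν
    exact p.i_sub_f ξ hξa η hηa hne ν hνi
  i_sub_a ξ hξ η hη hne ν hν := by
    obtain ⟨hξa, hηa, hνi⟩ := p.mem_of_mem_twinI hξ hη hν
    exact Finset.mem_insert_of_mem (p.i_sub_a ξ hξa η hηa hne hνi)
  star_cond ξ hξ η hη hne := by
    obtain rfl | hξα := eq_or_ne ξ α
    · rw [p.ostar_twinH_self_left hαβ.le hη hne]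
      exact Finset.empty_subset _
    obtain rfl | hηα := eq_or_ne η α
    · rw [ostar_comm (p.isGreatest_twinH hαβ.le hξ) (p.isGreatest_twinH hαβ.le hη) hne,
        p.ostar_twinH_self_left hαβ.le hξ hne.symm]
      exact Finset.empty_subset _
    rw [p.twinI_of_ne hξα hηα]
    exact p.ostar_twinH_subset hαβ.le hαa (Finset.mem_of_mem_insert_of_ne hξ hξα)
      (Finset.mem_of_mem_insert_of_ne hη hηα) hne

theorem addTwin_le (hβ : β ∈ p.a) (hαβ : α < β) (hαa : α ∉ p.a) :
    PfLe (p.addTwin hβ hαβ hαa) p := by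
  have ne_α {ν : Ordinal} (hν : ν ∈ p.a) : ν ≠ α := ne_of_mem_of_not_mem hν hαa
  refine ⟨Finset.subset_insert α p.a, fun ξ hξ => ?_, fun ξ hξ η hη _ => ?_⟩
  · change p.twinH α β ξ ∩ p.a = p.h ξ
    rw [p.twinH_of_ne (ne_α hξ)]
    exact duplicate_inter_eq_self (p.h_sub ξ hξ) hαa
  · exact p.twinI_of_ne (ne_α hξ) (ne_α hη)

theorem mem_addTwin_h (hβ : β ∈ p.a) (hαβ : α < β) (hαa : α ∉ p.a) (hξ : ξ ∈ p.a) :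
    α ∈ (p.addTwin hβ hαβ hαa).h ξ ↔ β ∈ p.h ξ := by
  change α ∈ p.twinH α β ξ ↔ β ∈ p.h ξ
  rw [p.twinH_of_ne (ne_of_mem_of_not_mem hξ hαa), self_mem_duplicate]

end PfCond

theorem stmt15_general {f : Ordinal → Ordinal → Set Ordinal} (p : PfCond f) {α β : Ordinal}
    (hβ : β ∈ p.a) (hαβ : α < β) (hαa : α ∉ p.a) :
    ∃ q : PfCond f, PfLe q p ∧ ∀ ξ ∈ p.a, α ∈ q.h ξ ↔ β ∈ p.h ξ :=
  ⟨p.addTwin hβ hαβ hαa, p.addTwin_le hβ hαβ hαa, fun _ => p.mem_addTwin_h hβ hαβ hαa⟩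

theorem stmt15
    (f : Ordinal → Ordinal → Set Ordinal)
    (hsymm : ∀ α β, f α β = f β α)
    (hlt : ∀ α β γ, γ ∈ f α β → γ < α ∧ γ < β)
    (hcount : ∀ α β, (f α β).Countable)
    (p : PfCond f) (β : Ordinal) (hβ : β ∈ p.a)
    (b : Finset Ordinal) (hb : ∀ ν ∈ b, ν ∈ p.a ∧ ν < β)
    (α : Ordinal) (hαβ : α < β) (hαa : α ∉ p.a) :
    ∃ q : PfCond f, PfLe q p ∧ α ∈ q.h β ∧ α ∉ b.biUnion q.h := by
  obtain ⟨q, hqp, hq⟩ := stmt15_general p hβ hαβ hαa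
  refine ⟨q, hqp, (hq β hβ).2 (p.h_mem β hβ), ?_⟩
  simp only [Finset.mem_biUnion, not_exists, not_and]
  exact fun ν hν hαν =>
    (hb ν hν).2.not_ge (p.h_le ν (hb ν hν).1 β ((hq ν (hb ν hν).1).1 hαν))
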